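/- arXiv:1012.1095 — 5 statements merged into one kernel-verified Lean document; each statement's English description precedes it below -/
import Mathlib

section
/- In the Boolean OR mixture model, fix a monitor index h, let J₀ = { j : g_{hj} = 0 }, let G′ be the submatrix of G with rows i ≠ h and columns j ∈ J₀, and let x′ = G′ ⊗ (y_j)_{j ∈ J₀}. Then for every v ∈ {0,1}^{m−1}, P( (x_i)_{i ≠ h} = v and x_h = 0 ) = ( ∏_{j : g_{hj} = 1} (1 − p_j) ) · P( x′ = v ). -/
/-- Boolean OR mixture: `x i = ⋁_j (g i j ∧ y j)`. -/
def orMix {ι κ : Type*} [Fintype κ] (G : ι → κ → Bool) (y : κ → Bool) (i : ι) : Bool :=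
  decide (∃ j, G i j = true ∧ y j = true)

/-- Weight of a configuration `y` under independent Bernoulli sources with
parameters `p`. -/
noncomputable def bweight {κ : Type*} [Fintype κ] (p : κ → ℝ) (y : κ → Bool) : ℝ :=
  ∏ j, if y j then p j else 1 - p j

open Classical in
/-- Probability of an event `E` under independent Bernoulli sources with
parameters `p`. -/
noncomputable def bprob {κ : Type*} [Fintype κ] [DecidableEq κ] (p : κ → ℝ)
    (E : (κ → Bool) → Prop) : ℝ :=
  ∑ y : κ → Bool, if E y then bweight p y else 0

open Classical in
theorem bprob_eq_filter {κ : Type*} [Fintype κ] [DecidableEq κ] (p : κ → ℝ)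
    (E : (κ → Bool) → Prop) :
    bprob p E = ∑ y ∈ Finset.univ.filter E, bweight p y := by
  unfold bprob
  rw [Finset.sum_filter]

/-- Fix a monitor `h`.  The joint probability that all other monitors read `v`
while monitor `h` reads `0` factors as `(∏_{j : g_{hj}=1} (1 - p_j))` times the
probability that the OR mixture `x' = G' ⊗ (y_j)_{j ∈ J₀}` (rows `i ≠ h`,
columns the sources not observed by `h`) equals `v`. -/
theorem or_mixture_restrict_zero (m n : ℕ) (G : Fin m → Fin n → Bool)
    (p : Fin n → ℝ) (hp : ∀ j, p j ∈ Set.Icc (0 : ℝ) 1) (h : Fin m)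
    (v : {i : Fin m // i ≠ h} → Bool) :
    bprob p (fun y =>
        (∀ i : {i : Fin m // i ≠ h}, orMix G y i.1 = v i) ∧ orMix G y h = false)
      = (∏ j ∈ Finset.univ.filter (fun j => G h j = true), (1 - p j)) *
          bprob (fun j : {j : Fin n // G h j = false} => p j.1)
            (fun y' => ∀ i : {i : Fin m // i ≠ h},
              orMix (fun (i : {i : Fin m // i ≠ h}) (j : {j : Fin n // G h j = false})
                => G i.1 j.1) y' i = v i) := by
  classical
  rw [bprob_eq_filter, bprob_eq_filter, Finset.mul_sum]
  have key : ∀ y : Fin n → Bool, orMix G y h = false →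
      ∀ j, G h j = true → y j = false := by
    intro y hy j hj
    simp only [orMix, decide_eq_false_iff_not, not_exists, not_and] at hy
    simpa using hy j hj
  have mix : ∀ y : Fin n → Bool, (∀ j, G h j = true → y j = false) →
      ∀ i : {i : Fin m // i ≠ h},
      orMix (fun (i : {i : Fin m // i ≠ h}) (j : {j : Fin n // G h j = false})
                => G i.1 j.1) (fun j => y j.1) i = orMix G y i.1 := by
    intro y hy i
    simp only [orMix, decide_eq_decide]
    constructor
    · rintro ⟨j, h1, h2⟩
      exact ⟨j.1, h1, h2⟩
    · rintro ⟨j, h1, h2⟩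
      refine ⟨⟨j, ?_⟩, h1, h2⟩
      by_contra hc
      have := hy j (by simpa using hc)
      simp [this] at h2
  have ext0 : ∀ y' : {j : Fin n // G h j = false} → Bool, ∀ j, G h j = true →
      (fun j => if hj : G h j = false then y' ⟨j, hj⟩ else false) j = false := by
    intro y' j hj
    simp [hj]
  have res : ∀ y' : {j : Fin n // G h j = false} → Bool,
      (fun j : {j : Fin n // G h j = false} =>
        (fun j => if hj : G h j = false then y' ⟨j, hj⟩ else false) j.1) = y' := by
    intro y'
    funext j
    simp [j.2]
  refine Finset.sum_bij' (fun y _ => fun j => y j.1)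
    (fun y' _ => fun j => if hj : G h j = false then y' ⟨j, hj⟩ else false) ?_ ?_ ?_ ?_ ?_
  · intro y hy
    simp only [Finset.mem_filter, Finset.mem_univ, true_and] at hy ⊢
    intro i
    rw [mix y (key y hy.2) i]
    exact hy.1 i
  · intro y' hy
    simp only [Finset.mem_filter, Finset.mem_univ, true_and] at hy ⊢
    refine ⟨fun i => ?_, ?_⟩
    · rw [← mix _ (ext0 y') i, res y']
      exact hy i
    · simp only [orMix, decide_eq_false_iff_not, not_exists, not_and]
      intro j hj
      simp [hj]
  · intro y hy
    simp only [Finset.mem_filter, Finset.mem_univ, true_and] at hy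
    funext j
    by_cases hj : G h j = false
    · simp [hj]
    · simp [hj, key y hy.2 j (by simpa using hj)]
  · intro y' _
    exact res y'
  · intro y hy
    simp only [Finset.mem_filter, Finset.mem_univ, true_and] at hy
    unfold bweight
    rw [← Finset.prod_filter_mul_prod_filter_not Finset.univ (fun j => G h j = true)]
    congr 1
    · refine Finset.prod_congr rfl fun j hj => ?_
      simp [key y hy.2 j (by simpa using hj)]
    · refine Finset.prod_subtype _ (fun j => by simp) _
end

section
/- (Lemma 1) In the Boolean OR mixture model, fix a monitor index h and assume P(x_h = 0) > 0. Let J₀ = { j : g_{hj} = 0 }, let G′ be the submatrix of G with rows i ≠ h and columns j ∈ J₀, and let x′ = G′ ⊗ (y_j)_{j ∈ J₀}. Then the conditional distribution of (x_i)_{i ≠ h} given x_h = 0 equals the distribution of x′: for every v ∈ {0,1}^{m−1}, P( (x_i)_{i ≠ h} = v | x_h = 0 ) = P( x′ = v ). In particular, the conditional observation vector is itself an OR mixture of the sources not observed by monitor h, with unchanged active probabilities. -/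
theorem bprob_true_aux {κ : Type*} [Fintype κ] [DecidableEq κ] (p : κ → ℝ) :
    bprob p (fun _ => True) = 1 := by
  unfold bprob bweight
  simp only [if_true]
  have := Finset.prod_univ_sum (fun _ : κ => (Finset.univ : Finset Bool))
    (fun j b => if b = true then p j else 1 - p j)
  rw [Fintype.piFinset_univ] at this
  rw [← this]
  simp

theorem bprob_split_aux {n : ℕ} (p : Fin n → ℝ) (g : Fin n → Bool)
    (E : (Fin n → Bool) → Prop) (E' : ({j : Fin n // g j = false} → Bool) → Prop)
    (hE : ∀ y, E y ↔ (E' (fun j => y j.1) ∧ ∀ j, g j = true → y j = false)) :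
    bprob p E = bprob (fun j : {j : Fin n // g j = false} => p j.1) E' *
      ∏ j : {j : Fin n // ¬ g j = false}, (1 - p j.1) := by
  classical
  unfold bprob
  rw [← (Equiv.piEquivPiSubtypeProd (fun j => g j = false) (fun _ : Fin n => Bool)).symm.sum_comp,
    Fintype.sum_prod_type, Finset.sum_mul]
  refine Finset.sum_congr rfl fun a _ => ?_
  rw [Finset.sum_eq_single (fun _ => false)]
  · have h1 : E ((Equiv.piEquivPiSubtypeProd (fun j => g j = false)
        (fun _ : Fin n => Bool)).symm (a, fun _ => false)) ↔ E' a := by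
      rw [hE]
      have : (fun j : {j : Fin n // g j = false} => (Equiv.piEquivPiSubtypeProd
          (fun j => g j = false) (fun _ : Fin n => Bool)).symm (a, fun _ => false) j.1) = a := by
        funext j
        simp [Equiv.piEquivPiSubtypeProd, j.2]
      rw [this]
      refine and_iff_left ?_
      intro j hj
      simp [Equiv.piEquivPiSubtypeProd, hj]
    simp only [h1]
    split_ifs with h2
    · unfold bweight
      rw [← Fintype.prod_subtype_mul_prod_subtype (fun j => g j = false)]
      congr 1
      · refine Finset.prod_congr rfl fun j _ => ?_
        simp [Equiv.piEquivPiSubtypeProd, j.2]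
      · refine Finset.prod_congr rfl fun j _ => ?_
        simp [Equiv.piEquivPiSubtypeProd, j.2]
    · simp
  · intro b _ hb
    rw [if_neg]
    intro hc
    apply hb
    funext j
    have := ((hE _).1 hc).2 j.1 (by simpa using j.2)
    simpa [Equiv.piEquivPiSubtypeProd, j.2] using this
  · simp

/-- (Lemma 1) Fix a monitor `h` with `P(x_h = 0) > 0`.  The conditional
distribution of the remaining observations given `x_h = 0` equals the
distribution of the OR mixture `x' = G' ⊗ (y_j)_{j ∈ J₀}` of the sources not
observed by `h` (rows `i ≠ h`), with unchanged active probabilities. -/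
theorem or_mixture_conditional_on_zero (m n : ℕ) (G : Fin m → Fin n → Bool)
    (p : Fin n → ℝ) (hp : ∀ j, p j ∈ Set.Icc (0 : ℝ) 1) (h : Fin m)
    (hpos : 0 < bprob p (fun y => orMix G y h = false))
    (v : {i : Fin m // i ≠ h} → Bool) :
    bprob p (fun y =>
        (∀ i : {i : Fin m // i ≠ h}, orMix G y i.1 = v i) ∧ orMix G y h = false)
      / bprob p (fun y => orMix G y h = false)
      = bprob (fun j : {j : Fin n // G h j = false} => p j.1)
          (fun y' => ∀ i : {i : Fin m // i ≠ h},
            orMix (fun (i : {i : Fin m // i ≠ h}) (j : {j : Fin n // G h j = false})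
              => G i.1 j.1) y' i = v i) := by
  have hz : ∀ y, orMix G y h = false ↔ ∀ j, G h j = true → y j = false := by
    intro y
    simp [orMix]
  have hden := bprob_split_aux p (G h) (fun y => orMix G y h = false) (fun _ => True)
    (fun y => by rw [hz]; simp)
  rw [bprob_true_aux, one_mul] at hden
  rw [div_eq_iff hpos.ne', hden]
  apply bprob_split_aux
  intro y
  rw [hz]
  refine and_congr_left fun hy => forall_congr' fun i => ?_
  have : orMix G y i.1 = orMix (fun (i : {i : Fin m // i ≠ h})
      (j : {j : Fin n // G h j = false}) => G i.1 j.1) (fun j => y j.1) i := by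
    unfold orMix
    rw [decide_eq_decide]
    constructor
    · rintro ⟨j, h1, h2⟩
      refine ⟨⟨j, ?_⟩, h1, h2⟩
      by_contra hc
      have := hy j (by simpa using hc)
      simp [this] at h2
    · rintro ⟨j, h1, h2⟩
      exact ⟨j.1, h1, h2⟩
  rw [this]
end

section
/- In the Boolean OR mixture model, suppose two distinct columns a ≠ b of G are identical (g_{ia} = g_{ib} for all i). Let G″ be the m×(n−1) matrix obtained from G by deleting column b, and let y″ be independent Bernoulli sources with parameters p″_a = 1 − (1 − p_a)(1 − p_b) and p″_j = p_j for all j ∉ {a, b}. Then the observation vectors G ⊗ y and G″ ⊗ y″ have the same joint distribution on {0,1}^m. -/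
theorem bprob_split {κ : Type*} [Fintype κ] [DecidableEq κ] (p : κ → ℝ)
    (E : (κ → Bool) → Prop) (b : κ) :
    bprob p E = p b * bprob (fun j : {j : κ // j ≠ b} => p j.1)
        (fun y => E ((Equiv.funSplitAt b Bool).symm (true, y)))
      + (1 - p b) * bprob (fun j : {j : κ // j ≠ b} => p j.1)
        (fun y => E ((Equiv.funSplitAt b Bool).symm (false, y))) := by
  classical
  have hw : ∀ (c : Bool) (y : {j : κ // j ≠ b} → Bool),
      bweight p ((Equiv.funSplitAt b Bool).symm (c, y))
        = (if c then p b else 1 - p b) * bweight (fun j : {j : κ // j ≠ b} => p j.1) y := by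
    intro c y
    unfold bweight
    rw [Fintype.prod_eq_mul_prod_subtype_ne _ b]
    congr 1
    · simp [Equiv.funSplitAt, Equiv.piSplitAt]
    · refine Finset.prod_congr rfl ?_
      rintro ⟨j, hj⟩ _
      simp [Equiv.funSplitAt, Equiv.piSplitAt, hj]
  unfold bprob
  rw [← (Equiv.funSplitAt b Bool).symm.sum_comp, Fintype.sum_prod_type, Fintype.sum_bool,
    Finset.mul_sum, Finset.mul_sum]
  simp only [hw, mul_ite, mul_zero]
  simp

theorem orMix_split {ι κ : Type*} [Fintype κ] [DecidableEq κ] (G : ι → κ → Bool) (b : κ)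
    (c : Bool) (y : {j : κ // j ≠ b} → Bool) (i : ι) :
    orMix G ((Equiv.funSplitAt b Bool).symm (c, y)) i
      = ((G i b && c) || orMix (fun i (j : {j : κ // j ≠ b}) => G i j.1) y i) := by
  rw [Bool.eq_iff_iff]
  simp only [orMix, decide_eq_true_eq, Bool.or_eq_true, Bool.and_eq_true]
  constructor
  · rintro ⟨j, h1, h2⟩
    by_cases hj : j = b
    · subst hj
      left
      simpa [Equiv.funSplitAt, Equiv.piSplitAt, h1] using h2
    · right
      refine ⟨⟨j, hj⟩, h1, ?_⟩
      simpa [Equiv.funSplitAt, Equiv.piSplitAt, hj] using h2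
  · rintro (⟨h1, h2⟩ | ⟨⟨j, hj⟩, h1, h2⟩)
    · exact ⟨b, h1, by simpa [Equiv.funSplitAt, Equiv.piSplitAt] using h2⟩
    · exact ⟨j, h1, by simpa [Equiv.funSplitAt, Equiv.piSplitAt, hj] using h2⟩

/-- If two distinct columns `a ≠ b` of `G` are identical, then deleting column
`b` and replacing `p_a` by `1 - (1-p_a)(1-p_b)` yields an OR mixture whose
observation vector has the same joint distribution on `{0,1}^m`. -/
theorem or_mixture_merge_duplicate_columns (m n : ℕ) (G : Fin m → Fin n → Bool)
    (p : Fin n → ℝ) (hp : ∀ j, p j ∈ Set.Icc (0 : ℝ) 1)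
    (a b : Fin n) (hab : a ≠ b) (hcols : ∀ i, G i a = G i b)
    (v : Fin m → Bool) :
    bprob p (fun y => ∀ i, orMix G y i = v i)
      = bprob
          (fun j : {j : Fin n // j ≠ b} =>
            if (j : Fin n) = a then 1 - (1 - p a) * (1 - p b) else p j.1)
          (fun y'' => ∀ i,
            orMix (fun (i : Fin m) (j : {j : Fin n // j ≠ b}) => G i j.1) y'' i = v i) := by
  rw [bprob_split p _ b, bprob_split (fun j : {j : Fin n // j ≠ b} => p j.1) _ ⟨a, hab⟩,
    bprob_split (fun j : {j : Fin n // j ≠ b} => p j.1) _ ⟨a, hab⟩,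
    bprob_split (fun j : {j : Fin n // j ≠ b} =>
      if (j : Fin n) = a then 1 - (1 - p a) * (1 - p b) else p j.1) _ ⟨a, hab⟩]
  have hq : (fun j : {j : {j : Fin n // j ≠ b} // j ≠ ⟨a, hab⟩} =>
      if (j.1 : Fin n) = a then 1 - (1 - p a) * (1 - p b) else p j.1.1)
      = fun j => p j.1.1 := by
    funext j
    rw [if_neg]
    intro h
    exact j.2 (Subtype.ext h)
  rw [hq]
  simp only [orMix_split, hcols, Bool.and_true, Bool.and_false, Bool.false_or,
    ← Bool.or_assoc, Bool.or_self, Bool.or_false, if_true]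
  ring
end

section
/- (Non-identifiability of duplicate columns) In the Boolean OR mixture model, suppose two distinct columns a ≠ b of G are identical (g_{ia} = g_{ib} for all i). Let p′ = (p′_1,…,p′_n) be any other parameter vector in [0,1]^n with p′_j = p_j for all j ∉ {a, b} and (1 − p′_a)(1 − p′_b) = (1 − p_a)(1 − p_b), and let y′ be independent Bernoulli sources with parameters p′. Then G ⊗ y and G ⊗ y′ have the same joint distribution on {0,1}^m; hence sources with identical columns cannot be distinguished from binary observations. -/
theorem sum_update_two {n : ℕ} (a : Fin n) (f : (Fin n → Bool) → ℝ) :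
    2 * ∑ y, f y = ∑ y, (f (Function.update y a true) + f (Function.update y a false)) := by
  have hinv : Function.Involutive (fun y : Fin n → Bool => Function.update y a (!(y a))) := by
    intro y
    simp
  have h1 : ∑ y, f (Function.update y a (!(y a))) = ∑ y, f y :=
    Equiv.sum_comp hinv.toPerm f
  rw [two_mul]
  nth_rewrite 2 [← h1]
  rw [← Finset.sum_add_distrib]
  refine Finset.sum_congr rfl fun y _ => ?_
  cases h : y a
  · have : Function.update y a false = y := by rw [← h]; simp
    rw [this]; simp [add_comm]
  · have : Function.update y a true = y := by rw [← h]; simp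
    rw [this]; simp

theorem bweight_update {n : ℕ} (p : Fin n → ℝ) (a b : Fin n) (hab : a ≠ b)
    (y : Fin n → Bool) (s t : Bool) :
    bweight p (Function.update (Function.update y a s) b t)
      = (if s then p a else 1 - p a) * (if t then p b else 1 - p b) *
        ∏ j ∈ (Finset.univ.erase a).erase b, if y j then p j else 1 - p j := by
  unfold bweight
  rw [← Finset.mul_prod_erase Finset.univ _ (Finset.mem_univ a),
    ← Finset.mul_prod_erase (Finset.univ.erase a) _
      (Finset.mem_erase.2 ⟨hab.symm, Finset.mem_univ b⟩), ← mul_assoc]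
  congr 1
  · simp [Function.update_of_ne hab]
  · refine Finset.prod_congr rfl fun j hj => ?_
    simp only [Finset.mem_erase] at hj
    rw [Function.update_of_ne hj.1, Function.update_of_ne hj.2.1]

theorem orMix_update {m n : ℕ} (G : Fin m → Fin n → Bool) (a b : Fin n) (hab : a ≠ b)
    (hcols : ∀ i, G i a = G i b) (y : Fin n → Bool) (s t : Bool) (h : (s || t) = true)
    (i : Fin m) :
    orMix G (Function.update (Function.update y a s) b t) i
      = orMix G (Function.update (Function.update y a true) b true) i := by
  unfold orMix
  rw [decide_eq_decide]
  constructor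
  · rintro ⟨j, hj, hy⟩
    refine ⟨j, hj, ?_⟩
    grind [Function.update_apply]
  · rintro ⟨j, hj, hy⟩
    by_cases hja : j = a ∨ j = b
    · have hGa : G i a = true := by rcases hja with rfl | rfl <;> simp_all
      have hGb : G i b = true := hcols i ▸ hGa
      cases t
      · exact ⟨a, hGa, by grind [Function.update_apply]⟩
      · exact ⟨b, hGb, by grind [Function.update_apply]⟩
    · exact ⟨j, hj, by grind [Function.update_apply]⟩

/-- (Non-identifiability of duplicate columns).  If two distinct columns
`a ≠ b` of `G` are identical and `p'` agrees with `p` off `{a, b}` with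
`(1-p'_a)(1-p'_b) = (1-p_a)(1-p_b)`, then `G ⊗ y` and `G ⊗ y'` have the same
joint distribution on `{0,1}^m`. -/
theorem or_mixture_duplicate_columns_nonidentifiable (m n : ℕ)
    (G : Fin m → Fin n → Bool) (p p' : Fin n → ℝ)
    (hp : ∀ j, p j ∈ Set.Icc (0 : ℝ) 1) (hp' : ∀ j, p' j ∈ Set.Icc (0 : ℝ) 1)
    (a b : Fin n) (hab : a ≠ b) (hcols : ∀ i, G i a = G i b)
    (hagree : ∀ j, j ∉ ({a, b} : Set (Fin n)) → p' j = p j)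
    (hprod : (1 - p' a) * (1 - p' b) = (1 - p a) * (1 - p b))
    (v : Fin m → Bool) :
    bprob p (fun y => ∀ i, orMix G y i = v i)
      = bprob p' (fun y => ∀ i, orMix G y i = v i) := by
  classical
  have key : ∀ q : Fin n → ℝ, 2 * (2 * bprob q (fun y => ∀ i, orMix G y i = v i)) =
      ∑ y : Fin n → Bool,
        ((if ∀ i, orMix G (Function.update (Function.update y a true) b true) i = v i
            then 1 - (1 - q a) * (1 - q b) else 0) +
          (if ∀ i, orMix G (Function.update (Function.update y a false) b false) i = v i
            then (1 - q a) * (1 - q b) else 0)) *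
        ∏ j ∈ (Finset.univ.erase a).erase b, if y j then q j else 1 - q j := by
    intro q
    unfold bprob
    rw [sum_update_two b, sum_update_two a]
    refine Finset.sum_congr rfl fun y _ => ?_
    simp only [bweight_update q a b hab, orMix_update G a b hab hcols y true false rfl,
      orMix_update G a b hab hcols y false true rfl]
    split_ifs <;> simp_all <;> ring
  have h : 2 * (2 * bprob p (fun y => ∀ i, orMix G y i = v i)) =
      2 * (2 * bprob p' (fun y => ∀ i, orMix G y i = v i)) := by
    rw [key p, key p', hprod]
    refine Finset.sum_congr rfl fun y _ => ?_
    congr 1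
    refine Finset.prod_congr rfl fun j hj => ?_
    simp only [Finset.mem_erase] at hj
    rw [hagree j (by simp [hj.1, hj.2.1])]
  linarith
end

section
/- (Identifiability) Let m ≥ 1 and consider the complete OR mixture model on m monitors with parameters p_S ∈ [0,1) for every nonempty subset S of {1,…,m}. The joint distribution of the observation vector x determines the parameters uniquely: if p = (p_S) and p′ = (p′_S) are two parameter vectors with all entries in [0,1) such that the induced joint distributions of x on {0,1}^m coincide, then p_S = p′_S for every nonempty S ⊆ {1,…,m}. -/
open Classical in
lemma aux_bprob_zero {κ : Type*} [Fintype κ] [DecidableEq κ] (p : κ → ℝ) (J : κ → Prop) :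
    bprob p (fun y => ∀ j, J j → y j = false) = ∏ j, if J j then 1 - p j else 1 := by
  have h1 : ∀ j, (if J j then 1 - p j else 1) =
      ∑ b : Bool, (if b then (if J j then 0 else p j) else 1 - p j) := by
    intro j
    by_cases h : J j <;> simp [h]
  simp only [h1]
  rw [Finset.prod_univ_sum, Fintype.piFinset_univ]
  unfold bprob bweight
  refine Finset.sum_congr rfl fun y _ => ?_
  split_ifs with h
  · refine Finset.prod_congr rfl fun j _ => ?_
    by_cases hj : J j
    · simp [h j hj]
    · simp [hj]
  · push Not at h
    obtain ⟨j, hj, hy⟩ := h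
    symm
    apply Finset.prod_eq_zero (Finset.mem_univ j)
    simp at hy
    simp [hj, hy]

open Classical in
lemma aux_bprob_sum {κ α : Type*} [Fintype κ] [DecidableEq κ] [Fintype α] (p : κ → ℝ)
    (X : (κ → Bool) → α) (P : α → Prop) :
    bprob p (fun y => P (X y)) = ∑ v : α, if P v then bprob p (fun y => X y = v) else 0 := by
  unfold bprob
  have : ∀ v : α, (if P v then ∑ y : κ → Bool, (if X y = v then bweight p y else 0) else 0)
      = ∑ y : κ → Bool, if X y = v then (if P v then bweight p y else 0) else 0 := by
    intro v
    split_ifs <;> simp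
  simp only [this]
  rw [Finset.sum_comm]
  simp

/-- (Identifiability) In the complete OR mixture model on `m ≥ 1` monitors with
all parameters in `[0,1)`, the joint distribution of the observation vector on
`{0,1}^m` determines the parameters uniquely. -/
theorem complete_or_mixture_identifiable (m : ℕ) (hm : 1 ≤ m)
    (p p' : {S : Finset (Fin m) // S.Nonempty} → ℝ)
    (hp : ∀ S, p S ∈ Set.Ico (0 : ℝ) 1) (hp' : ∀ S, p' S ∈ Set.Ico (0 : ℝ) 1)
    (hdist : ∀ v : Fin m → Bool,
      bprob p (fun y => ∀ i, orMix (fun (i : Fin m)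
          (S : {S : Finset (Fin m) // S.Nonempty}) => decide (i ∈ S.1)) y i = v i)
        = bprob p' (fun y => ∀ i, orMix (fun (i : Fin m)
            (S : {S : Finset (Fin m) // S.Nonempty}) => decide (i ∈ S.1)) y i = v i)) :
    p = p' := by
  classical
  have key : ∀ A : Finset (Fin m),
      (∏ S : {S : Finset (Fin m) // S.Nonempty}, if ¬ S.1 ⊆ A then 1 - p S else 1)
      = ∏ S : {S : Finset (Fin m) // S.Nonempty}, if ¬ S.1 ⊆ A then 1 - p' S else 1 := by
    intro A
    have hE : (fun y : {S : Finset (Fin m) // S.Nonempty} → Bool =>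
          ∀ j, (¬ j.1 ⊆ A) → y j = false) =
        fun y => (fun v : Fin m → Bool => ∀ i, i ∉ A → v i = false)
          (orMix (fun (i : Fin m)
            (S : {S : Finset (Fin m) // S.Nonempty}) => decide (i ∈ S.1)) y) := by
      funext y
      apply propext
      constructor
      · intro h i hi
        simp only [orMix, decide_eq_false_iff_not]
        rintro ⟨S, hS, hy⟩
        have := h S (fun hs => hi (hs (by simpa using hS)))
        simp [this] at hy
      · intro h S hS
        obtain ⟨i, hiS, hiA⟩ := Finset.not_subset.mp hS
        have := h i hiA
        simp only [orMix, decide_eq_false_iff_not] at this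
        by_contra hy
        exact this ⟨S, by simpa using hiS, by simpa using hy⟩
    have h1 := aux_bprob_zero p (fun S : {S : Finset (Fin m) // S.Nonempty} => ¬ S.1 ⊆ A)
    have h2 := aux_bprob_zero p' (fun S : {S : Finset (Fin m) // S.Nonempty} => ¬ S.1 ⊆ A)
    rw [hE] at h1 h2
    have g1 := aux_bprob_sum p (orMix (fun (i : Fin m)
      (S : {S : Finset (Fin m) // S.Nonempty}) => decide (i ∈ S.1)))
      (fun v : Fin m → Bool => ∀ i, i ∉ A → v i = false)
    have g2 := aux_bprob_sum p' (orMix (fun (i : Fin m)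
      (S : {S : Finset (Fin m) // S.Nonempty}) => decide (i ∈ S.1)))
      (fun v : Fin m → Bool => ∀ i, i ∉ A → v i = false)
    have hd : ∀ v : Fin m → Bool,
        bprob p (fun y => orMix (fun (i : Fin m)
          (S : {S : Finset (Fin m) // S.Nonempty}) => decide (i ∈ S.1)) y = v)
        = bprob p' (fun y => orMix (fun (i : Fin m)
          (S : {S : Finset (Fin m) // S.Nonempty}) => decide (i ∈ S.1)) y = v) := by
      intro v
      simp only [funext_iff]
      exact hdist v
    have g3 := g1.trans ((Finset.sum_congr rfl fun v _ => by rw [hd v]).trans g2.symm)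
    have h3 := h1.symm.trans (g3.trans h2)
    convert h3
  have hpos : ∀ q : {S : Finset (Fin m) // S.Nonempty} → ℝ, (∀ S, q S ∈ Set.Ico (0 : ℝ) 1) →
      ∀ A : Finset (Fin m),
      (∏ S : {S : Finset (Fin m) // S.Nonempty}, if ¬ S.1 ⊆ A then 1 - q S else 1) ≠ 0 := by
    intro q hq A
    refine Finset.prod_ne_zero_iff.mpr fun S _ => ?_
    have := (hq S).2
    split_ifs <;> linarith
  have hsplit : ∀ q : {S : Finset (Fin m) // S.Nonempty} → ℝ, ∀ A : Finset (Fin m),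
      (∏ S : {S : Finset (Fin m) // S.Nonempty}, if ¬ S.1 ⊆ A then 1 - q S else 1) *
      (∏ S : {S : Finset (Fin m) // S.Nonempty}, if S.1 ⊆ A then 1 - q S else 1) =
      ∏ S : {S : Finset (Fin m) // S.Nonempty}, if ¬ S.1 ⊆ (∅ : Finset (Fin m)) then 1 - q S else 1 := by
    intro q A
    rw [← Finset.prod_mul_distrib]
    refine Finset.prod_congr rfl fun S _ => ?_
    have : ¬ S.1 ⊆ (∅ : Finset (Fin m)) := by
      rw [Finset.subset_empty]
      exact S.2.ne_empty
    by_cases h : S.1 ⊆ A <;> simp [h, S.2.ne_empty]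
  have key2 : ∀ A : Finset (Fin m),
      (∏ S : {S : Finset (Fin m) // S.Nonempty}, if S.1 ⊆ A then 1 - p S else 1)
      = ∏ S : {S : Finset (Fin m) // S.Nonempty}, if S.1 ⊆ A then 1 - p' S else 1 := by
    intro A
    have h1 := hsplit p A
    rw [key ∅, key A, ← hsplit p' A] at h1
    exact mul_left_cancel₀ (hpos p' hp' A) h1
  have main : ∀ A : Finset (Fin m), ∀ hA : A.Nonempty, p ⟨A, hA⟩ = p' ⟨A, hA⟩ := by
    intro A
    induction A using Finset.strongInduction with
    | H A ih =>
      intro hA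
      have h := key2 A
      rw [← Finset.mul_prod_erase _ _ (Finset.mem_univ ⟨A, hA⟩),
        ← Finset.mul_prod_erase Finset.univ
          (fun S : {S : Finset (Fin m) // S.Nonempty} => if S.1 ⊆ A then 1 - p' S else 1)
          (Finset.mem_univ ⟨A, hA⟩)] at h
      have he : ∏ S ∈ Finset.univ.erase (⟨A, hA⟩ : {S : Finset (Fin m) // S.Nonempty}),
            (if S.1 ⊆ A then 1 - p S else 1)
          = ∏ S ∈ Finset.univ.erase (⟨A, hA⟩ : {S : Finset (Fin m) // S.Nonempty}),
            (if S.1 ⊆ A then 1 - p' S else 1) := by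
        refine Finset.prod_congr rfl fun S hS => ?_
        split_ifs with hs
        · have hne : S.1 ≠ A := fun e => (Finset.mem_erase.mp hS).1 (Subtype.ext e)
          rw [ih S.1 (lt_of_le_of_ne hs hne) S.2]
        · rfl
      rw [he] at h
      have h3 := mul_right_cancel₀ (by
        refine Finset.prod_ne_zero_iff.mpr fun S _ => ?_
        have := (hp' S).2
        split_ifs
        · linarith
        · exact one_ne_zero) h
      simp at h3
      exact h3
  funext S
  exact main S.1 S.2
end
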